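/- Let D be an ADF and let v and w be strongly admissible interpretations of D. Then the join v ⊔_i w is also a strongly admissible interpretation of D. -/

import Mathlib

/-!
The characteristic operator is monotone in the information order, and a derivation of `SJrel` is a
well-founded iteration of it. Monotonicity alone therefore shows that a derivation for `v` is also
one for every interpretation above `v`, and it remains to see that `v` and `w` both lie below their
join, that is, that they never assign opposite values.

This goes by induction on the derivation of `a` for `v`, using of `w` only that it is admissible.
If `w` does not contradict `v` on the set `P` that justifies `a`, then `v|_P` and `w` have an upper
bound `j`. Both `v a = Γ(v|_P) a` and `w a ≤ Γ(w) a` lie below `Γ(j) a`, so they are not opposite.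
-/

/-- Three truth values: true, false, undecided. -/
inductive TV : Type
  | t | f | u
deriving DecidableEq, Repr

/-- The information order on truth values: u <_i t and u <_i f. -/
def TV.ile (x y : TV) : Prop := x = TV.u ∨ x = y

/-- The information order on interpretations, extended pointwise. -/
def ILE {A : Type*} (v w : A → TV) : Prop := ∀ a, TV.ile (v a) (w a)

/-- An abstract dialectical framework on a set of arguments `A`:
each argument `a` has an acceptance condition `C a : (A → Bool) → Bool`. -/
structure ADF (A : Type*) where
  C : A → (A → Bool) → Bool

/-- The trivial interpretation mapping every argument to undecided. -/
def trivialInterp (A : Type*) : A → TV := fun _ => TV.u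

/-- The parents of `a` are the arguments on which its acceptance condition depends. -/
def ADF.parents {A : Type*} [DecidableEq A] (D : ADF A) (a : A) : Set A :=
  {b | ∃ w : A → Bool, D.C a w ≠ D.C a (Function.update w b (!w b))}

/-- A two-valued assignment `w` completes a three-valued interpretation `v`. -/
def Completes {A : Type*} (w : A → Bool) (v : A → TV) : Prop :=
  ∀ b, (v b = TV.t → w b = true) ∧ (v b = TV.f → w b = false)

/-- `φ` is irrefutable under `v`: every completion of `v` makes `φ` true. -/
def Irrefutable {A : Type*} (φ : (A → Bool) → Bool) (v : A → TV) : Prop :=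
  ∀ w : A → Bool, Completes w v → φ w = true

/-- `φ` is unsatisfiable under `v`: every completion of `v` makes `φ` false. -/
def Unsat {A : Type*} (φ : (A → Bool) → Bool) (v : A → TV) : Prop :=
  ∀ w : A → Bool, Completes w v → φ w = false

open Classical in
/-- The characteristic operator Γ_D of an ADF. -/
noncomputable def Gamma {A : Type*} (D : ADF A) (v : A → TV) : A → TV := fun a =>
  if Irrefutable (D.C a) v then TV.t
  else if Unsat (D.C a) v then TV.f
  else TV.u

open Classical in
/-- `v|_P`: agrees with `v` on `P` and is undecided elsewhere. -/
noncomputable def restrictTV {A : Type*} (v : A → TV) (P : Set A) : A → TV :=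
  fun b => if b ∈ P then v b else TV.u

/-- Strong acceptability/deniability of an argument with respect to interpretation `v`
and set `S`, relative to an excluded set `E` (the first index). An argument `a` with
`v a = t` (resp. `v a = f`) is strongly acceptable (resp. strongly deniable) iff there is
`P ⊆ (parents a ∩ S) \ E` with `φ_a^{v|_P}` irrefutable (resp. unsatisfiable) and every
`p ∈ P` strongly acceptable/deniable relative to `E ∪ {p}`. -/
inductive SJrel {A : Type*} [DecidableEq A] (D : ADF A) (v : A → TV) (S : Set A) :
    Set A → A → Prop
  | acc (E : Set A) (a : A) (P : Set A)
      (ha : v a = TV.t)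
      (hP : P ⊆ (D.parents a ∩ S) \ E)
      (hirr : Irrefutable (D.C a) (restrictTV v P))
      (hrec : ∀ p ∈ P, SJrel D v S (E ∪ {p}) p) : SJrel D v S E a
  | den (E : Set A) (a : A) (P : Set A)
      (ha : v a = TV.f)
      (hP : P ⊆ (D.parents a ∩ S) \ E)
      (hunsat : Unsat (D.C a) (restrictTV v P))
      (hrec : ∀ p ∈ P, SJrel D v S (E ∪ {p}) p) : SJrel D v S E a

/-- `a` is strongly acceptable/deniable w.r.t. `v` and `S`
(i.e., relative to the excluded set `{a}`). -/
def StronglyJustified {A : Type*} [DecidableEq A] (D : ADF A) (v : A → TV)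
    (S : Set A) (a : A) : Prop :=
  SJrel D v S {a} a

/-- `S` is a least set for `a` with respect to `v`. -/
def LeastSet {A : Type*} [DecidableEq A] (D : ADF A) (v : A → TV)
    (a : A) (S : Set A) : Prop :=
  StronglyJustified D v S a ∧
  ∀ S' : Set A, S'.ncard < S.ncard → ¬ StronglyJustified D v S' a

/-- An interpretation is strongly admissible iff every argument assigned `t`/`f`
is strongly acceptable/deniable w.r.t. `v` and some set `S`. -/
def StronglyAdmissible {A : Type*} [DecidableEq A] (D : ADF A) (v : A → TV) : Prop :=
  ∀ a : A, v a ≠ TV.u → ∃ S : Set A, StronglyJustified D v S a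

/-- `g` is the grounded interpretation of `D`: the least fixed point of `Γ_D`. -/
def IsGrounded {A : Type*} (D : ADF A) (g : A → TV) : Prop :=
  Gamma D g = g ∧ ∀ w : A → TV, Gamma D w = w → ILE g w

/-- An interpretation is admissible iff `v ≤_i Γ_D(v)`. -/
def Admissible {A : Type*} (D : ADF A) (v : A → TV) : Prop :=
  ILE v (Gamma D v)

/-- An interpretation is conflict-free. -/
def ConflictFree {A : Type*} (D : ADF A) (v : A → TV) : Prop :=
  ∀ a : A, (v a = TV.t → ∃ w : A → Bool, Completes w v ∧ D.C a w = true) ∧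
           (v a = TV.f → Unsat (D.C a) v)

/-- The join of two interpretations: take `v`'s value where defined, else `w`'s. -/
def joinI {A : Type*} (v w : A → TV) : A → TV :=
  fun a => if v a = TV.u then w a else v a

/-- The information order as an order instance, so that `v ≤ w` on interpretations unfolds to
`ILE v w`. -/
instance : PartialOrder TV where
  le := TV.ile
  le_refl _ := Or.inr rfl
  le_trans := by rintro x y z (rfl | rfl) h; exacts [Or.inl rfl, h]
  le_antisymm := by rintro x y (rfl | rfl) (h | h); exacts [h.symm, h.symm, rfl, rfl]

theorem TV.u_le (x : TV) : TV.u ≤ x := Or.inl rfl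

theorem TV.eq_of_le {x y : TV} (hx : x ≠ TV.u) (h : x ≤ y) : x = y := h.resolve_left hx

section Join

variable {A : Type*} {v w : A → TV} {a : A}

theorem joinI_of_eq_u (ha : v a = TV.u) : joinI v w a = w a := if_pos ha

theorem joinI_of_ne_u (ha : v a ≠ TV.u) : joinI v w a = v a := if_neg ha

theorem ne_u_or_ne_u_of_joinI_ne_u (ha : joinI v w a ≠ TV.u) : v a ≠ TV.u ∨ w a ≠ TV.u :=
  or_iff_not_imp_left.2 fun hv => (joinI_of_eq_u (not_not.1 hv)).symm.trans_ne ha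

theorem le_joinI_left (v w : A → TV) : v ≤ joinI v w := fun a =>
  (eq_or_ne (v a) TV.u).imp id fun ha => (joinI_of_ne_u ha).symm

theorem le_joinI_right (h : ∀ a, v a ≠ TV.u → w a ≤ v a) : w ≤ joinI v w := fun a => by
  by_cases ha : v a = TV.u
  · exact (joinI_of_eq_u ha).ge
  · exact (h a ha).trans (le_joinI_left v w a)

end Join

section Restrict

variable {A : Type*} {v : A → TV} {P : Set A} {a : A}

theorem restrictTV_of_mem (ha : a ∈ P) : restrictTV v P a = v a := if_pos ha

theorem restrictTV_of_notMem (ha : a ∉ P) : restrictTV v P a = TV.u := if_neg ha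

theorem mem_of_restrictTV_ne_u (ha : restrictTV v P a ≠ TV.u) : a ∈ P :=
  not_imp_comm.1 restrictTV_of_notMem ha

theorem restrictTV_le (v : A → TV) (P : Set A) : restrictTV v P ≤ v := fun a => by
  by_cases ha : a ∈ P
  · exact (restrictTV_of_mem ha).le
  · exact (restrictTV_of_notMem ha).trans_le (TV.u_le _)

theorem restrictTV_mono (P : Set A) : Monotone fun v : A → TV => restrictTV v P :=
  fun v w hvw a => by
    by_cases ha : a ∈ P
    · simpa only [restrictTV_of_mem ha] using hvw a
    · simp only [restrictTV_of_notMem ha, le_refl]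

end Restrict

section Completions

variable {A : Type*} {φ : (A → Bool) → Bool} {v w : A → TV}

theorem exists_completes (v : A → TV) : ∃ x : A → Bool, Completes x v :=
  ⟨fun b => decide (v b = TV.t), fun b => by constructor <;> simp +contextual⟩

theorem Completes.anti {x : A → Bool} (hvw : v ≤ w) (hx : Completes x w) : Completes x v :=
  fun b =>
    ⟨fun hb => (hx b).1 (TV.eq_of_le (by simp [hb]) (hvw b) ▸ hb),
      fun hb => (hx b).2 (TV.eq_of_le (by simp [hb]) (hvw b) ▸ hb)⟩

theorem Irrefutable.mono (hvw : v ≤ w) (h : Irrefutable φ v) : Irrefutable φ w :=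
  fun x hx => h x (hx.anti hvw)

theorem Unsat.mono (hvw : v ≤ w) (h : Unsat φ v) : Unsat φ w :=
  fun x hx => h x (hx.anti hvw)

theorem Unsat.not_irrefutable (h : Unsat φ v) : ¬ Irrefutable φ v := fun h' => by
  obtain ⟨x, hx⟩ := exists_completes v
  exact Bool.false_ne_true ((h x hx).symm.trans (h' x hx))

end Completions

section CharacteristicOperator

variable {A : Type*} {D : ADF A} {v : A → TV} {a : A}

theorem Gamma_eq_t_iff : Gamma D v a = TV.t ↔ Irrefutable (D.C a) v := by
  unfold Gamma
  split_ifs <;> simp_all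

theorem Gamma_eq_f_iff : Gamma D v a = TV.f ↔ Unsat (D.C a) v := by
  constructor
  · unfold Gamma
    split_ifs <;> simp_all
  · intro h
    rw [Gamma, if_neg h.not_irrefutable, if_pos h]

theorem Gamma_mono (D : ADF A) : Monotone (Gamma D) := fun v w hvw a => by
  cases h : Gamma D v a with
  | t => exact (Gamma_eq_t_iff.2 ((Gamma_eq_t_iff.1 h).mono hvw)).ge
  | f => exact (Gamma_eq_f_iff.2 ((Gamma_eq_f_iff.1 h).mono hvw)).ge
  | u => exact TV.u_le _

end CharacteristicOperator

section StrongAdmissibility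

variable {A : Type*} [DecidableEq A] {D : ADF A} {v w : A → TV} {S E : Set A} {a : A}

theorem SJrel.of_Gamma_eq {P : Set A} (ha : v a ≠ TV.u) (hP : P ⊆ (D.parents a ∩ S) \ E)
    (hΓ : Gamma D (restrictTV v P) a = v a) (hrec : ∀ p ∈ P, SJrel D v S (E ∪ {p}) p) :
    SJrel D v S E a := by
  cases hva : v a with
  | t => exact .acc E a P hva hP (Gamma_eq_t_iff.1 (hΓ.trans hva)) hrec
  | f => exact .den E a P hva hP (Gamma_eq_f_iff.1 (hΓ.trans hva)) hrec
  | u => exact absurd hva ha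

-- Stating the step through `Gamma` treats acceptability and deniability at once.
@[elab_as_elim]
theorem SJrel.induction_Gamma {motive : ∀ E a, SJrel D v S E a → Prop}
    (step : ∀ E a P (ha : v a ≠ TV.u) (hP : P ⊆ (D.parents a ∩ S) \ E)
      (hΓ : Gamma D (restrictTV v P) a = v a) (hrec : ∀ p ∈ P, SJrel D v S (E ∪ {p}) p),
      (∀ p (hp : p ∈ P), motive (E ∪ {p}) p (hrec p hp)) →
        motive E a (.of_Gamma_eq ha hP hΓ hrec))
    (h : SJrel D v S E a) : motive E a h := by
  induction h with
  | acc E a P ha hP hirr hrec ih =>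
    exact step E a P (by simp [ha]) hP ((Gamma_eq_t_iff.2 hirr).trans ha.symm) hrec ih
  | den E a P ha hP hunsat hrec ih =>
    exact step E a P (by simp [ha]) hP ((Gamma_eq_f_iff.2 hunsat).trans ha.symm) hrec ih

theorem SJrel.mono (hvw : v ≤ w) (h : SJrel D v S E a) : SJrel D w S E a := by
  induction h using SJrel.induction_Gamma with
  | step E a P ha hP hΓ _ ih =>
    have hva : v a = w a := TV.eq_of_le ha (hvw a)
    have hΓ_le : v a ≤ Gamma D (restrictTV w P) a :=
      hΓ.ge.trans (Gamma_mono D (restrictTV_mono P hvw) a)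
    exact .of_Gamma_eq (hva ▸ ha) hP ((TV.eq_of_le ha hΓ_le).symm.trans hva) ih

theorem SJrel.le_Gamma (h : SJrel D v S E a) : v a ≤ Gamma D v a := by
  induction h using SJrel.induction_Gamma with
  | step _ a P _ _ hΓ _ _ => exact hΓ.ge.trans (Gamma_mono D (restrictTV_le v P) a)

theorem SJrel.le_of_admissible (hw : Admissible D w) (h : SJrel D v S E a) : w a ≤ v a := by
  induction h using SJrel.induction_Gamma with
  | step _ a P ha _ hΓ _ ih =>
    let j := joinI (restrictTV v P) w
    have hvj : restrictTV v P ≤ j := le_joinI_left _ _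
    have hwj : w ≤ j := le_joinI_right fun b hb => by
      have hbP := mem_of_restrictTV_ne_u hb
      exact (ih b hbP).trans (restrictTV_of_mem hbP).ge
    have hva : v a = Gamma D j a := TV.eq_of_le ha (hΓ.ge.trans (Gamma_mono D hvj a))
    calc
      w a ≤ Gamma D w a := hw a
      _ ≤ Gamma D j a := Gamma_mono D hwj a
      _ = v a := hva.symm

theorem StronglyAdmissible.admissible (hv : StronglyAdmissible D v) : Admissible D v := fun a => by
  by_cases ha : v a = TV.u
  · exact Or.inl ha
  · obtain ⟨S, hS⟩ := hv a ha
    exact hS.le_Gamma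

end StrongAdmissibility

theorem join_strongly_admissible_general {A : Type*} [DecidableEq A]
    (D : ADF A) (v w : A → TV)
    (hv : StronglyAdmissible D v) (hw : StronglyAdmissible D w) :
    StronglyAdmissible D (joinI v w) := by
  have hvj : v ≤ joinI v w := le_joinI_left v w
  have hwj : w ≤ joinI v w := le_joinI_right fun a ha => by
    obtain ⟨S, hS⟩ := hv a ha
    exact SJrel.le_of_admissible hw.admissible hS
  intro a ha
  rcases ne_u_or_ne_u_of_joinI_ne_u ha with hva | hwa
  · exact (hv a hva).imp fun S hS => SJrel.mono hvj hS
  · exact (hw a hwa).imp fun S hS => SJrel.mono hwj hS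

/-- The join of two strongly admissible interpretations is
strongly admissible. -/
theorem join_strongly_admissible {A : Type*} [Fintype A] [DecidableEq A]
    (D : ADF A) (v w : A → TV)
    (hv : StronglyAdmissible D v) (hw : StronglyAdmissible D w) :
    StronglyAdmissible D (joinI v w) :=
  join_strongly_admissible_general D v w hv hw
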